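/- Let G be a Tanner graph with a rooted tree decomposition, and let t be an introduce node with single child t' introducing a check node c, i.e. B_t = B_{t'} ∪ {c} with c ∈ R and c ∉ B_{t'}. Then for every R' ⊆ B_t^c and Q ⊆ B_t^v, a set S is a trapping set with parameters (R',Q) in G_t if and only if either (|N_{G_t}(c) ∩ Q| is odd, c ∈ R', and S is a trapping set with parameters (R' \ {c}, Q) in G_{t'}), or (|N_{G_t}(c) ∩ Q| is even, c ∉ R', and S is a trapping set with parameters (R',Q) in G_{t'}). -/

import Mathlib

/-- A Tanner graph: a bipartite graph on vertex set `V` partitioned into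
variable nodes `L` and check nodes `R`, every edge joining `L` and `R`. -/
structure TannerGraph (V : Type*) where
  G : SimpleGraph V
  L : Set V
  R : Set V
  disj : Disjoint L R
  cover : L ∪ R = Set.univ
  bipartite : ∀ ⦃u v⦄, G.Adj u v → (u ∈ L ∧ v ∈ R) ∨ (u ∈ R ∧ v ∈ L)

/-- `Γ_o(G[S])`: check nodes having an odd number of neighbours in `S`. -/
def TannerGraph.Gamma {V : Type*} (TG : TannerGraph V) (S : Set V) : Set V :=
  {c | c ∈ TG.R ∧ Odd ((TG.G.neighborSet c ∩ S).ncard)}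

/-- A rooted tree decomposition of the graph `G`: `T` is a finite tree with
root `root` and bags `B i ⊆ V` covering all vertices and edges, such that for
every vertex the set of bags containing it induces a connected subgraph of `T`. -/
structure IsRootedTreeDecomp {V ι : Type*} (G : SimpleGraph V)
    (T : SimpleGraph ι) (root : ι) (B : ι → Set V) : Prop where
  isTree : T.IsTree
  covers : ∀ v, ∃ i, v ∈ B i
  coversEdge : ∀ ⦃u v⦄, G.Adj u v → ∃ i, u ∈ B i ∧ v ∈ B i
  connBags : ∀ v, (T.induce {i | v ∈ B i}).Connected

/-- `Desc T root t i`: `i` is a descendant of `t` in the tree `T` rooted at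
`root`, i.e. `t` lies on a path from the root to `i` (`t` itself included). -/
def Desc {ι : Type*} (T : SimpleGraph ι) (root : ι) (t i : ι) : Prop :=
  ∃ p : T.Walk root i, p.IsPath ∧ t ∈ p.support

/-- `IsChildOf T root s t`: `s` is a child of `t` in the rooted tree. -/
def IsChildOf {ι : Type*} (T : SimpleGraph ι) (root : ι) (s t : ι) : Prop :=
  T.Adj t s ∧ Desc T root t s

/-- `∪_{i ∈ T_t} B_i`: union of the bags over all descendants of `t`;
this is the vertex set of the induced subgraph `G_t`. -/
def subVerts {V ι : Type*} (T : SimpleGraph ι) (root : ι) (B : ι → Set V)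
    (t : ι) : Set V :=
  {v | ∃ i, Desc T root t i ∧ v ∈ B i}

/-- `Γ_o(G_t[S])`, where `W` is the vertex set of `G_t`: check nodes of `G_t`
having an odd number of `G_t`-neighbours in `S`. -/
def GammaLoc {V : Type*} (TG : TannerGraph V) (W S : Set V) : Set V :=
  {c | c ∈ TG.R ∧ c ∈ W ∧ Odd ((TG.G.neighborSet c ∩ W ∩ S).ncard)}

/-- `S` is a trapping set with parameters `(R', Q)` in `G_t`, where `W` is the
vertex set of `G_t` and `Bt` is the bag at `t`. -/
def HasParams {V : Type*} (TG : TannerGraph V) (W Bt S R' Q : Set V) : Prop :=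
  S.Nonempty ∧ S ⊆ W ∩ TG.L ∧ S ∩ (Bt ∩ TG.L) = Q ∧ GammaLoc TG W S = R'

/-- `S` is a trapping set with extended parameters `(I, Q, d)` in `G_t`. -/
def HasExtParams {V : Type*} (TG : TannerGraph V) (W Bt S I Q : Set V)
    (d : ℕ) : Prop :=
  S.Nonempty ∧ S ⊆ W ∩ TG.L ∧ S ∩ (Bt ∩ TG.L) = Q ∧
    GammaLoc TG W S ∩ (Bt ∩ TG.R) = I ∧ (GammaLoc TG W S \ (Bt ∩ TG.R)).ncard = d

/-- `Γ_o(G_t[Q ∪ B_t^c]) = {c ∈ B_t^c : |N_{G_t}(c) ∩ Q| is odd}`. -/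
def GammaBag {V : Type*} (TG : TannerGraph V) (W Bt Q : Set V) : Set V :=
  {c | c ∈ Bt ∩ TG.R ∧ Odd ((TG.G.neighborSet c ∩ W ∩ Q).ncard)}

theorem aux_refl {ι : Type*} {T : SimpleGraph ι} (hT : T.IsTree) (r i : ι) : Desc T r i i := by
  obtain ⟨p, hp, -⟩ := hT.existsUnique_path r i
  exact ⟨p, hp, p.end_mem_support⟩

theorem aux_path {ι : Type*} {T : SimpleGraph ι} (hT : T.IsTree) {r i : ι}
    {p q : T.Walk r i} (hp : p.IsPath) (hq : q.IsPath) : p = q :=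
  (hT.existsUnique_path r i).unique hp hq

theorem aux_trans {ι : Type*} {T : SimpleGraph ι} (hT : T.IsTree) {r a b d : ι}
    (h1 : Desc T r a b) (h2 : Desc T r b d) : Desc T r a d := by
  classical
  obtain ⟨p, hp, ha⟩ := h1
  obtain ⟨q, hq, hb⟩ := h2
  refine ⟨q, hq, ?_⟩
  rw [aux_path hT hp (hq.takeUntil hb)] at ha
  exact q.support_takeUntil_subset_support hb ha

theorem aux_step {ι : Type*} {T : SimpleGraph ι} (hT : T.IsTree) (r : ι) {a b : ι}
    (h : T.Adj a b) : Desc T r a b ∨ Desc T r b a := by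
  obtain ⟨p, hp, -⟩ := hT.existsUnique_path r a
  obtain ⟨q, hq, -⟩ := hT.existsUnique_path r b
  by_cases ha : a ∈ q.support
  · exact Or.inl ⟨q, hq, ha⟩
  · exact Or.inr ⟨p, hp, hT.isAcyclic.mem_support_of_ne_mem_support_of_adj_of_isPath hp hq h ha⟩

theorem aux_parent {ι : Type*} {T : SimpleGraph ι} (hT : T.IsTree) {r a b x : ι}
    (h : T.Adj a b) (hab : Desc T r a b) (hx : Desc T r x b) : Desc T r x a ∨ x = b := by
  obtain ⟨p, hp, -⟩ := hT.existsUnique_path r a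
  obtain ⟨q, hq, ha⟩ := hab
  obtain ⟨q', hq', hx⟩ := hx
  obtain rfl := aux_path hT hq hq'
  rw [hT.isAcyclic.path_concat hp hq h ha, SimpleGraph.Walk.support_concat] at hx
  simp only [List.concat_eq_append, List.mem_append, List.mem_singleton] at hx
  exact hx.imp (fun h => ⟨p, hp, h⟩) id

theorem aux_uniq {ι : Type*} {T : SimpleGraph ι} (hT : T.IsTree) {r a a' b : ι}
    (h : T.Adj a b) (hab : Desc T r a b) (h' : T.Adj a' b) (hab' : Desc T r a' b) : a = a' := by
  obtain ⟨p, hp, -⟩ := hT.existsUnique_path r a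
  obtain ⟨p', hp', -⟩ := hT.existsUnique_path r a'
  obtain ⟨q, hq, ha⟩ := hab
  obtain ⟨q', hq', ha'⟩ := hab'
  obtain rfl := aux_path hT hq hq'
  have e1 := congrArg SimpleGraph.Walk.penultimate (hT.isAcyclic.path_concat hp hq h ha)
  have e2 := congrArg SimpleGraph.Walk.penultimate (hT.isAcyclic.path_concat hp' hq h' ha')
  simp only [SimpleGraph.Walk.penultimate_concat] at e1 e2
  exact e1.symm.trans e2

theorem aux_not {ι : Type*} {T : SimpleGraph ι} (hT : T.IsTree) {r a b : ι}
    (h : T.Adj a b) (hab : Desc T r a b) : ¬ Desc T r b a := by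
  rintro ⟨p, hp, hb⟩
  obtain ⟨q, hq, ha⟩ := hab
  exact hT.isAcyclic.ne_mem_support_of_support_of_adj_of_isPath hq hp h.symm ha hb

theorem aux_first {ι : Type*} {T : SimpleGraph ι} (hT : T.IsTree) {r t i : ι}
    (h : Desc T r t i) : i = t ∨ ∃ s, T.Adj t s ∧ Desc T r t s ∧ Desc T r s i := by
  classical
  obtain ⟨p, hp, ht⟩ := h
  have hs := p.take_spec ht
  have h1 := hp.takeUntil ht
  generalize p.takeUntil t ht = p1 at hs h1
  generalize p.dropUntil t ht = p2 at hs
  cases p2 with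
  | nil => exact Or.inl rfl
  | @cons _ s _ hadj q =>
    right
    refine ⟨s, hadj, ?_, p, hp, ?_⟩
    · refine (aux_step hT r hadj).resolve_right ?_
      rintro ⟨p', hp', hs'⟩
      obtain rfl := aux_path hT h1 hp'
      have := hp.support_nodup
      rw [← hs, SimpleGraph.Walk.support_append, List.nodup_append] at this
      exact this.2.2 _ hs' s (by simp) rfl
    · rw [← hs, SimpleGraph.Walk.support_append]
      simp

theorem aux_cross {V ι : Type*} {G : SimpleGraph V} {T : SimpleGraph ι} {root : ι}
    {B : ι → Set V} (hD : IsRootedTreeDecomp G T root B) {t t' : ι}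
    (hchild : IsChildOf T root t' t) {i j : ι} (hi : Desc T root t' i)
    (hj : ¬ Desc T root t' j) {v : V} (hvi : v ∈ B i) (hvj : v ∈ B j) :
    v ∈ B t' ∧ v ∈ B t := by
  have hT := hD.isTree
  obtain ⟨w⟩ := (hD.connBags v).preconnected ⟨i, hvi⟩ ⟨j, hvj⟩
  obtain ⟨d, -, h1, h2⟩ := w.exists_boundary_dart {x | Desc T root t' x.1} hi hj
  have hadj : T.Adj d.fst.1 d.snd.1 := d.adj
  have ha : v ∈ B d.fst.1 := d.fst.2
  have hb : v ∈ B d.snd.1 := d.snd.2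
  simp only [Set.mem_setOf_eq] at h1 h2
  generalize d.fst.1 = a at *
  generalize d.snd.1 = b at *
  rcases aux_step hT root hadj with h | h
  · exact absurd (aux_trans hT h1 h) h2
  · have := (aux_parent hT hadj.symm h h1).resolve_left h2
    subst this
    have := aux_uniq hT hadj.symm h hchild.1 hchild.2
    subst this
    exact ⟨ha, hb⟩

/-- introduce-check-node rule. -/
theorem stmt_12 {V ι : Type*} [Fintype V] [Fintype ι]
    (TG : TannerGraph V) (T : SimpleGraph ι) (root : ι) (B : ι → Set V)
    (hD : IsRootedTreeDecomp TG.G T root B)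
    (t t' : ι) (hchild : IsChildOf T root t' t)
    (honly : ∀ s, IsChildOf T root s t → s = t')
    (c : V) (hcR : c ∈ TG.R) (hcB : c ∉ B t') (hBt : B t = B t' ∪ {c})
    (R' Q : Set V) (hR' : R' ⊆ B t ∩ TG.R) (hQ : Q ⊆ B t ∩ TG.L)
    (S : Set V) :
    HasParams TG (subVerts T root B t) (B t) S R' Q ↔
      ((Odd ((TG.G.neighborSet c ∩ subVerts T root B t ∩ Q).ncard) ∧ c ∈ R' ∧
          HasParams TG (subVerts T root B t') (B t') S (R' \ {c}) Q) ∨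
       (Even ((TG.G.neighborSet c ∩ subVerts T root B t ∩ Q).ncard) ∧ c ∉ R' ∧
          HasParams TG (subVerts T root B t') (B t') S R' Q)) := by
  have hT := hD.isTree
  have htt : ¬ Desc T root t' t := aux_not hT hchild.1 hchild.2
  have hct : c ∈ B t := by simp [hBt]
  have hcL : c ∉ TG.L := fun h => Set.disjoint_left.1 TG.disj h hcR
  have hcW : c ∉ subVerts T root B t' := by
    rintro ⟨i, hi, hci⟩
    exact hcB (aux_cross hD hchild hi htt hci hct).1
  have hW : ∀ v, v ∈ subVerts T root B t ↔ v ∈ subVerts T root B t' ∨ v = c := by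
    intro v
    constructor
    · rintro ⟨i, hi, hv⟩
      rcases aux_first hT hi with rfl | ⟨s, h1, h2, h3⟩
      · rw [hBt] at hv
        exact hv.imp (fun h => ⟨t', aux_refl hT _ _, h⟩) id
      · obtain rfl := honly s ⟨h1, h2⟩
        exact Or.inl ⟨i, h3, hv⟩
    · rintro (⟨i, hi, hv⟩ | rfl)
      · exact ⟨i, aux_trans hT hchild.2 hi, hv⟩
      · exact ⟨t, aux_refl hT _ _, hct⟩
  have hN : ∀ v, TG.G.Adj c v → v ∈ subVerts T root B t → v ∈ B t := by
    intro v hcv hv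
    rcases (hW v).1 hv with ⟨i, hi, hvi⟩ | rfl
    · obtain ⟨j, hcj, hvj⟩ := hD.coversEdge hcv
      have hj : ¬ Desc T root t' j := fun h => hcW ⟨j, h, hcj⟩
      exact (aux_cross hD hchild hi hj hvi hvj).2
    · exact hct
  generalize subVerts T root B t = W at *
  generalize subVerts T root B t' = W' at *
  have hS : S ⊆ W ∩ TG.L ↔ S ⊆ W' ∩ TG.L := by
    constructor
    · intro h x hx
      refine ⟨((hW x).1 (h hx).1).resolve_right ?_, (h hx).2⟩
      rintro rfl
      exact hcL (h hx).2
    · exact fun h x hx => ⟨(hW x).2 (Or.inl (h hx).1), (h hx).2⟩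
  have hB : B t ∩ TG.L = B t' ∩ TG.L := by
    ext x
    rw [hBt]
    constructor
    · rintro ⟨h | rfl, h'⟩
      · exact ⟨h, h'⟩
      · exact absurd h' hcL
    · exact fun h => ⟨Or.inl h.1, h.2⟩
  by_cases hSL : S ⊆ W ∩ TG.L
  swap
  · simp only [HasParams, ← hS, hSL]
    simp
  by_cases hSQ : S ∩ (B t ∩ TG.L) = Q
  swap
  · simp only [HasParams, ← hB, hSQ]
    simp
  have hcN : TG.G.neighborSet c ∩ W ∩ Q = TG.G.neighborSet c ∩ W ∩ S := by
    subst hSQ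
    ext x
    constructor
    · exact fun h => ⟨h.1, h.2.1⟩
    · exact fun h => ⟨h.1, h.2, hN x h.1.1 h.1.2, (hSL h.2).2⟩
  have hNN : ∀ d, TG.G.neighborSet d ∩ W ∩ S = TG.G.neighborSet d ∩ W' ∩ S := by
    intro d
    ext x
    constructor
    · exact fun h => ⟨⟨h.1.1, ((hS.1 hSL) h.2).1⟩, h.2⟩
    · exact fun h => ⟨⟨h.1.1, (hSL h.2).1⟩, h.2⟩
  have hG : ∀ d, d ∈ GammaLoc TG W S ↔ d ∈ GammaLoc TG W' S ∨
      (d = c ∧ Odd ((TG.G.neighborSet c ∩ W ∩ Q).ncard)) := by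
    intro d
    simp only [GammaLoc, Set.mem_setOf_eq, hW d, hcN, ← hNN]
    constructor
    · rintro ⟨h1, h2 | rfl, h3⟩
      · exact Or.inl ⟨h1, h2, h3⟩
      · exact Or.inr ⟨rfl, h3⟩
    · rintro (⟨h1, h2, h3⟩ | ⟨rfl, h3⟩)
      · exact ⟨h1, Or.inl h2, h3⟩
      · exact ⟨hcR, Or.inr rfl, h3⟩
  have hcG : c ∉ GammaLoc TG W' S := fun h => hcW h.2.1
  have hSQ' := hB ▸ hSQ
  have hSL' := hS.1 hSL
  simp only [HasParams, hSQ, hSQ', hSL, hSL', true_and]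
  generalize GammaLoc TG W S = X at *
  generalize GammaLoc TG W' S = Y at *
  rw [← Nat.not_odd_iff_even]
  simp only [Set.ext_iff, Set.mem_diff, Set.mem_singleton_iff]
  by_cases ho : Odd ((TG.G.neighborSet c ∩ W ∩ Q).ncard)
  · simp only [ho, and_true, not_true, false_and, or_false, true_and] at hG ⊢
    grind
  · simp only [ho, and_false, or_false, false_and, not_false_iff, true_and, false_or] at hG ⊢
    grind
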